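/- There exists a constant c > 0 such that for all sufficiently large n, the number of distinct values attained by the permanent on the set of n×n matrices with entries ±1 satisfies r_n ≥ n^(c·log n / log log n). -/

import Mathlib

/-- The permanent of a square `n × n` real matrix:
`per(M) = Σ_{σ ∈ S_n} Π_i M_{i, σ(i)}`. -/
noncomputable def sqPerm {n : ℕ} (M : Matrix (Fin n) (Fin n) ℝ) : ℝ :=
  ∑ σ : Equiv.Perm (Fin n), ∏ i, M i (σ i)

/-- `permCountSq n = r_n`: the number of distinct values attained by the permanent
on the set `Ω_n` of `n × n` matrices with `±1` entries. -/
noncomputable def permCountSq (n : ℕ) : ℕ :=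
  {x : ℝ | ∃ M : Matrix (Fin n) (Fin n) ℝ,
      (∀ i j, M i j = 1 ∨ M i j = -1) ∧ sqPerm M = x}.ncard

open Finset

/-- Rectangular permanent: `perL rows A` sums over injective choices of columns in `A`. -/
noncomputable def perL {α : Type} [DecidableEq α] : List (α → ℝ) → Finset α → ℝ
  | [], _ => 1
  | r :: rs, A => ∑ d ∈ A, r d * perL rs (A.erase d)

/-- Rows which are identically one can be stripped off. -/
lemma perL_ones {α : Type} [DecidableEq α] (k : ℕ) (A : Finset α) :
    perL (List.replicate k (fun _ => (1:ℝ))) A = (A.card.descFactorial k : ℝ) := by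
  induction k generalizing A with
  | zero => simp [perL]
  | succ k ih =>
    rw [List.replicate_succ, perL]
    rw [Finset.sum_congr rfl (g := fun _ => ((A.card - 1).descFactorial k : ℝ))]
    · rw [sum_const, nsmul_eq_mul]
      rcases Nat.eq_zero_or_pos A.card with h | h
      · simp [h]
      · obtain ⟨a, ha⟩ := Nat.exists_eq_succ_of_ne_zero h.ne'
        rw [ha, Nat.succ_eq_add_one, Nat.succ_descFactorial_succ]; simp
    · intro d hd
      rw [ih, card_erase_of_mem hd, one_mul]

lemma perL_append_ones {α : Type} [DecidableEq α] (L : List (α → ℝ)) (k : ℕ) (A : Finset α) :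
    perL (L ++ List.replicate k (fun _ => (1:ℝ))) A
      = perL L A * ((A.card - L.length).descFactorial k : ℝ) := by
  induction L generalizing A with
  | nil => simp [perL, perL_ones]
  | cons r L ih =>
    simp only [List.cons_append, perL, sum_mul]
    refine sum_congr rfl fun d hd => ?_
    rw [ih, card_erase_of_mem hd, List.length_cons, mul_assoc]
    congr 4
    omega

/-- Column expansion. -/
lemma perL_insert {ι α : Type} [DecidableEq ι] [DecidableEq α] (C : ι → α → ℝ) (l : List ι)
    (hl : l.Nodup) (d : α) (A : Finset α) (hd : d ∉ A) :
    perL (l.map C) (insert d A) = perL (l.map C) A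
      + ∑ j ∈ l.toFinset, C j d * perL ((l.erase j).map C) A := by
  induction l generalizing A with
  | nil => simp [perL]
  | cons i l ih =>
    obtain ⟨hi, hl⟩ := List.nodup_cons.1 hl
    have hi' : i ∉ l.toFinset := by simpa using hi
    rw [List.toFinset_cons, sum_insert hi']
    simp only [List.map_cons, perL, List.erase_cons_head]
    rw [sum_insert hd, erase_insert hd]
    have h1 : ∀ c ∈ A, C i c * perL (l.map C) ((insert d A).erase c)
        = C i c * perL (l.map C) (A.erase c)
          + ∑ j ∈ l.toFinset, C j d * (C i c * perL ((l.erase j).map C) (A.erase c)) := by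
      intro c hc
      have hne : d ≠ c := by rintro rfl; exact hd hc
      rw [erase_insert_of_ne hne, ih hl _ (by simp [hd]), mul_add, mul_sum]
      congr 1
      refine sum_congr rfl fun j _ => by ring
    have h2 : ∀ j ∈ l.toFinset, C j d * perL (((i :: l).erase j).map C) A
        = ∑ c ∈ A, C j d * (C i c * perL ((l.erase j).map C) (A.erase c)) := by
      intro j hj
      have hne : i ≠ j := by rintro rfl; exact hi' hj
      rw [List.erase_cons_tail (by simpa using hne), List.map_cons, perL, mul_sum]
    rw [sum_congr rfl h1, sum_add_distrib, sum_congr rfl h2, sum_comm]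
    ring

/-- `perL` as a sum over injective functions. -/
lemma perL_ofFn {α : Type} [DecidableEq α] [Fintype α] (k : ℕ) (f : Fin k → α → ℝ) (A : Finset α) :
    perL (List.ofFn f) A
      = ∑ g : Fin k → α, if Function.Injective g ∧ ∀ i, g i ∈ A then ∏ i, f i (g i) else 0 := by
  induction k generalizing A with
  | zero => simp [perL, Function.injective_of_subsingleton]
  | succ k ih =>
    rw [List.ofFn_succ, perL]
    rw [← (Fin.consEquiv (fun _ => α)).sum_comp, Fintype.sum_prod_type, ← Finset.sum_subset (subset_univ A)]
    · refine sum_congr rfl fun d hd => ?_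
      rw [ih, mul_sum]
      refine sum_congr rfl fun g _ => ?_
      have key : Function.Injective ((Fin.consEquiv (fun _ => α)) (d, g))
          ↔ d ∉ Set.range g ∧ Function.Injective g := Fin.cons_injective_iff
      simp only [key, Fin.consEquiv_apply, Fin.prod_univ_succ, Fin.cons_zero,
        Fin.cons_succ, Fin.forall_fin_succ, hd, true_and, mem_erase, Set.mem_range, not_exists, mul_ite, mul_zero]
      refine if_congr ?_ rfl rfl
      grind
    · intro d _ hd
      refine sum_eq_zero fun g _ => ?_
      rw [if_neg]
      rintro ⟨_, h⟩
      exact hd (by simpa using h 0)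

lemma exists_sqPerm {α : Type} [DecidableEq α] [Fintype α] (n : ℕ) (L : List (α → ℝ))
    (hL : L.length = n) (hα : Fintype.card α = n) (h : ∀ r ∈ L, ∀ d, r d = 1 ∨ r d = -1) :
    ∃ M : Matrix (Fin n) (Fin n) ℝ, (∀ i j, M i j = 1 ∨ M i j = -1) ∧ sqPerm M = perL L univ := by
  subst hL
  let E : Fin L.length ≃ α := (Fintype.equivFinOfCardEq hα).symm
  refine ⟨fun i j => L.get i (E j), fun i j => h _ (List.get_mem _ _) _, ?_⟩
  conv_rhs => rw [← List.ofFn_get L]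
  rw [perL_ofFn, ← sum_filter]
  unfold sqPerm
  refine sum_bij (fun σ _ => fun i => E (σ i)) ?_ ?_ ?_ ?_
  · intro σ _
    simp only [mem_filter, mem_univ, true_and, implies_true, and_true]
    exact E.injective.comp σ.injective
  · intro σ _ τ _ hh
    ext i
    have := congrFun hh i
    simpa [Fin.ext_iff] using E.injective this
  · intro g hg
    simp only [mem_filter, mem_univ, true_and, implies_true, and_true] at hg
    have hinj : Function.Injective (fun i => E.symm (g i)) := E.symm.injective.comp hg
    refine ⟨Equiv.ofBijective _ (Finite.injective_iff_bijective.1 hinj), mem_univ _, ?_⟩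
    ext i
    simp
  · intro σ _
    rfl


noncomputable def sg (b : Bool) : ℝ := if b then -1 else 1
lemma sg_mul_self (b : Bool) : sg b * sg b = 1 := by cases b <;> simp [sg]
lemma sg_or (b : Bool) : sg b = 1 ∨ sg b = -1 := by cases b <;> simp [sg]

noncomputable def chi {q : ℕ} (K : Finset (Fin q)) (v : Fin q → Bool) : ℝ := ∏ i ∈ K, sg (v i)

lemma chi_or {q : ℕ} (K : Finset (Fin q)) (v : Fin q → Bool) : chi K v = 1 ∨ chi K v = -1 := by
  unfold chi
  induction K using Finset.induction_on with
  | empty => simp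
  | insert a s ha ih =>
    rw [prod_insert ha]
    rcases sg_or (v a) with h | h <;> rcases ih with h' | h' <;> simp [h, h']

lemma sum_chi {q : ℕ} (K : Finset (Fin q)) :
    ∑ v, chi K v = if K = ∅ then (2:ℝ) ^ q else 0 := by
  have h : ∀ v : Fin q → Bool, chi K v = ∏ i, (if i ∈ K then sg (v i) else 1) := by
    intro v; rw [chi, prod_ite_mem, univ_inter]
  have h2 := Finset.prod_univ_sum (fun _ : Fin q => (univ : Finset Bool))
    (fun i b => if i ∈ K then sg b else 1)
  rw [Fintype.piFinset_univ] at h2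
  rw [sum_congr rfl fun v _ => h v, ← h2]
  split_ifs with hK
  · subst hK; simp
  · obtain ⟨i, hi⟩ := nonempty_iff_ne_empty.2 hK
    refine prod_eq_zero (mem_univ i) ?_
    simp [hi, sg]

lemma chi_mul_mem {q : ℕ} (K : Finset (Fin q)) (v : Fin q → Bool) (j : Fin q) (hj : j ∈ K) :
    chi K v * sg (v j) = chi (K.erase j) v := by
  unfold chi
  rw [← mul_prod_erase K _ hj]
  linear_combination (∏ x ∈ K.erase j, sg (v x)) * sg_mul_self (v j)

lemma chi_mul_notMem {q : ℕ} (K : Finset (Fin q)) (v : Fin q → Bool) (j : Fin q) (hj : j ∉ K) :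
    chi K v * sg (v j) = chi (insert j K) v := by
  unfold chi
  rw [prod_insert hj, mul_comm]

lemma desc_succ (e k : ℕ) : ((e.descFactorial (k+1) : ℕ) : ℝ) = ((e:ℝ) - k) * e.descFactorial k := by
  rw [Nat.descFactorial_succ]
  push_cast
  rcases le_or_gt k e with h | h
  · rw [Nat.cast_sub h]
  · rw [Nat.descFactorial_of_lt h]; simp

lemma desc_succ' (e k : ℕ) : ((e.descFactorial (k+1) : ℕ) : ℝ) = (e:ℝ) * (e-1).descFactorial k := by
  cases e with
  | zero => simp
  | succ e => rw [Nat.succ_descFactorial_succ]; simp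

/-- Base expansion uniqueness. -/
lemma digits (T : ℝ) (m : ℕ) (a δ : ℕ → ℝ) (ha : ∀ k ≤ m, 0 < |a k|)
    (hs : ∀ k < m, (T + 1) * |a (k+1)| ≤ |a k|)
    (hδ : ∀ k ≤ m, |δ k| ≤ T) (hδ' : ∀ k ≤ m, δ k = 0 ∨ 1 ≤ |δ k|) :
    |∑ k ∈ range (m+1), δ k * a k| < (T+1) * |a 0| ∧
    (∑ k ∈ range (m+1), δ k * a k = 0 → ∀ k ≤ m, δ k = 0) := by
  induction m generalizing a δ with
  | zero =>
    have h0 := ha 0 le_rfl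
    have h1 := hδ 0 le_rfl
    simp only [zero_add, range_one, sum_singleton, abs_mul, mul_eq_zero]
    constructor
    · nlinarith
    · rintro (h | h) k hk
      · obtain rfl : k = 0 := by omega
        exact h
      · simp [h] at h0
  | succ m ih =>
    obtain ⟨i1, i2⟩ := ih (fun k => a (k+1)) (fun k => δ (k+1)) (fun k hk => ha _ (by omega))
      (fun k hk => hs _ (by omega)) (fun k hk => hδ _ (by omega)) (fun k hk => hδ' _ (by omega))
    simp only [zero_add] at i1
    rw [sum_range_succ']
    set S := ∑ k ∈ range (m+1), δ (k+1) * a (k+1)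
    have h0 := ha 0 (by omega)
    have h1 := hδ 0 (by omega)
    have h2 := hs 0 (by omega)
    simp only [zero_add] at h2
    have h3 : |S| < |a 0| := lt_of_lt_of_le i1 h2
    constructor
    · have := abs_add_le S (δ 0 * a 0)
      rw [abs_mul] at this
      nlinarith
    · intro hz
      have hd0 : δ 0 = 0 := by
        rcases hδ' 0 (by omega) with h | h
        · exact h
        · exfalso
          have : S = -(δ 0 * a 0) := by linarith
          rw [this, abs_neg, abs_mul] at h3
          nlinarith
      rw [hd0, zero_mul, add_zero] at hz
      intro k hk
      cases k with
      | zero => exact hd0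
      | succ k => exact i2 hz k (by omega)

abbrev Cols (q T e : ℕ) : Type := ((Fin (q+1) × Fin T) × (Fin q → Bool)) ⊕ Fin e

noncomputable def CC (q T e : ℕ) (i : Fin q) : Cols q T e → ℝ
  | Sum.inl (_, v) => sg (v i)
  | Sum.inr _ => 1

lemma main_induction (q T e : ℕ) (k : ℕ) : ∀ l : List (Fin q), l.Nodup → l.length = k →
    perL (l.map (CC q T e)) univ = (e.descFactorial k : ℝ) ∧
    (∀ d : Fin e, perL (l.map (CC q T e)) (univ.erase (Sum.inr d)) = ((e-1).descFactorial k : ℝ)) ∧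
    (∀ c (K : Finset (Fin q)),
      ∑ v, chi K v * perL (l.map (CC q T e)) (univ.erase (Sum.inl (c, v))) =
      if K ⊆ l.toFinset then 2 ^ q * (-1) ^ K.card * (K.card.factorial : ℝ)
        * (e.descFactorial (k - K.card) : ℝ) else 0) := by
  induction k with
  | zero =>
    intro l _ hk
    obtain rfl := List.length_eq_zero_iff.1 hk
    refine ⟨by simp [perL], by simp [perL], ?_⟩
    intro c K
    simp only [List.map_nil, perL, mul_one, sum_chi, List.toFinset_nil, subset_empty]
    split_ifs with h
    · subst h; simp
    · rfl
  | succ k ih =>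
    intro l hl hk
    have hA : perL (l.map (CC q T e)) univ = (e.descFactorial (k+1) : ℝ) := by
      cases l with
      | nil => simp at hk
      | cons i l =>
        obtain ⟨hi, hl⟩ := List.nodup_cons.1 hl
        obtain ⟨-, h2, h3⟩ := ih l hl (by simpa using hk)
        rw [List.map_cons, perL, Fintype.sum_sum_type, Fintype.sum_prod_type]
        have : ∀ c : Fin (q+1) × Fin T, ∑ v, CC q T e i (Sum.inl (c, v)) *
            perL (l.map (CC q T e)) (univ.erase (Sum.inl (c, v))) = 0 := by
          intro c
          have := h3 c {i}
          rw [if_neg (by simpa using hi)] at this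
          rw [← this]
          refine sum_congr rfl fun v _ => ?_
          simp [CC, chi]
        rw [sum_eq_zero fun c _ => this c, zero_add]
        simp only [CC, h2, desc_succ', one_mul, sum_const, card_univ, Fintype.card_fin, nsmul_eq_mul]
    have hcol : ∀ d, perL (l.map (CC q T e)) (univ.erase d) = (e.descFactorial (k+1) : ℝ)
        - ∑ j ∈ l.toFinset, CC q T e j d * perL ((l.erase j).map (CC q T e)) (univ.erase d) := by
      intro d
      have := perL_insert (CC q T e) l hl d (univ.erase d) (by simp)
      rw [insert_erase (mem_univ d), hA] at this
      linarith
    have hcard : l.toFinset.card = k + 1 := by rw [List.toFinset_card_of_nodup hl, hk]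
    have ih' : ∀ j ∈ l.toFinset, _ := fun j hj => ih (l.erase j) (hl.erase j)
      (by rw [List.length_erase_of_mem (by simpa using hj), hk]; rfl)
    refine ⟨hA, ?_, ?_⟩
    · intro d
      rw [hcol, sum_congr rfl (g := fun _ => (((e-1).descFactorial k : ℕ) : ℝ))]
      · rw [sum_const, hcard, desc_succ', desc_succ, nsmul_eq_mul]
        have : 1 ≤ e := by have := d.2; omega
        push_cast [Nat.cast_sub this]
        ring
      · intro j hj
        rw [(ih' j hj).2.1]; simp [CC]
    · intro c K
      have htf : ∀ j, (l.erase j).toFinset = l.toFinset.erase j := by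
        intro j; ext x; simp [hl.mem_erase_iff]
      have hx : ∀ j ∈ l.toFinset, ∑ v, chi K v * (CC q T e j (Sum.inl (c, v)) *
          perL ((l.erase j).map (CC q T e)) (univ.erase (Sum.inl (c, v))))
          = if j ∈ K ∧ K ⊆ l.toFinset then 2 ^ q * (-1) ^ (K.card - 1) * ((K.card - 1).factorial : ℝ)
            * (e.descFactorial (k + 1 - K.card) : ℝ) else 0 := by
        intro j hj
        have h3 := (ih' j hj).2.2 c
        by_cases hjK : j ∈ K
        · have h4 := h3 (K.erase j)
          rw [sum_congr rfl (g := fun v => chi (K.erase j) v *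
            perL ((l.erase j).map (CC q T e)) (univ.erase (Sum.inl (c, v)))), h4]
          · rw [htf, card_erase_of_mem hjK]
            have hp : 0 < K.card := card_pos.2 ⟨j, hjK⟩
            have e1 : k - (K.card - 1) = k + 1 - K.card := by omega
            rw [e1]
            refine if_congr ?_ rfl rfl
            constructor
            · intro h
              refine ⟨hjK, fun x hx => ?_⟩
              by_cases hxj : x = j
              · rw [hxj]; exact hj
              · exact mem_of_mem_erase (h (mem_erase.2 ⟨hxj, hx⟩))
            · exact fun h => erase_subset_erase j h.2
          · intro v _
            rw [← chi_mul_mem K v j hjK]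
            simp only [CC]; ring
        · have h4 := h3 (insert j K)
          rw [sum_congr rfl (g := fun v => chi (insert j K) v *
            perL ((l.erase j).map (CC q T e)) (univ.erase (Sum.inl (c, v)))), h4]
          · rw [if_neg, if_neg]
            · simp [hjK]
            · intro h
              have := h (mem_insert_self j K)
              simp [htf] at this
          · intro v _
            rw [← chi_mul_notMem K v j hjK]
            simp only [CC]; ring
      have hexp : ∑ v, chi K v * perL (l.map (CC q T e)) (univ.erase (Sum.inl (c, v)))
          = (∑ v, chi K v) * (e.descFactorial (k+1) : ℝ) - ∑ j ∈ l.toFinset, ∑ v, chi K v * (CC q T e j (Sum.inl (c, v)) *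
          perL ((l.erase j).map (CC q T e)) (univ.erase (Sum.inl (c, v)))) := by
        rw [sum_comm, sum_mul, ← sum_sub_distrib]
        refine sum_congr rfl fun v _ => ?_
        rw [hcol, mul_sub, mul_sum]
      rw [hexp, sum_congr rfl hx, sum_chi]
      by_cases hK : K = ∅
      · subst hK; simp
      · rw [if_neg hK, zero_mul, zero_sub]
        by_cases hs : K ⊆ l.toFinset
        · simp only [hs, and_true, if_true]
          rw [sum_ite_mem, inter_eq_right.2 hs, sum_const, nsmul_eq_mul]
          have hp : 0 < K.card := card_pos.2 (nonempty_iff_ne_empty.2 hK)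
          obtain ⟨a, ha⟩ := Nat.exists_eq_succ_of_ne_zero hp.ne'
          rw [ha, Nat.succ_eq_add_one, Nat.factorial_succ]
          simp only [Nat.add_sub_cancel]
          push_cast
          ring
        · simp [hs]

def Kset (q k : ℕ) : Finset (Fin q) := univ.filter (fun i => i.val < k)

lemma card_Kset (q k : ℕ) (h : k ≤ q) : (Kset q k).card = k := by
  unfold Kset
  rw [Fin.card_filter_val_lt]
  omega

lemma sum_signs (T τ : ℕ) (h : τ ≤ T) :
    ∑ t : Fin T, (if t.val < τ then (1:ℝ) else -1) = 2 * τ - T := by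
  rw [Fin.sum_univ_eq_sum_range (fun t => if t < τ then (1:ℝ) else -1)]
  obtain ⟨s, rfl⟩ := Nat.exists_eq_add_of_le h
  induction s with
  | zero =>
    rw [sum_congr rfl (g := fun _ => (1:ℝ)) (fun t ht => if_pos (by simpa using ht))]
    simp; ring
  | succ s ih =>
    rw [← add_assoc, sum_range_succ, ih (by omega), if_neg (by omega)]
    push_cast; ring

noncomputable def firstRow (q T e : ℕ) (τ : ℕ → ℕ) : Cols q T e → ℝ
  | Sum.inl (c, v) => (if c.2.val < τ c.1.val then 1 else -1) * chi (Kset q c.1.val) v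
  | Sum.inr _ => 1

noncomputable def wt (q e k : ℕ) : ℝ :=
  2 ^ q * (-1) ^ k * (k.factorial : ℝ) * (e.descFactorial (q - k) : ℝ)

lemma value (q T e : ℕ) (τ : ℕ → ℕ) (hτ : ∀ k, τ k ≤ T) :
    perL (firstRow q T e τ :: (List.finRange q).map (CC q T e)) univ
      = (e.descFactorial (q+1) : ℝ) + ∑ k ∈ range (q+1), (2 * (τ k : ℝ) - T) * wt q e k := by
  obtain ⟨-, h2, h3⟩ := main_induction q T e q (List.finRange q) (List.nodup_finRange q)
    (List.length_finRange)
  rw [perL, Fintype.sum_sum_type, Fintype.sum_prod_type, add_comm]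
  congr 1
  · simp only [firstRow, h2, desc_succ', one_mul, sum_const, card_univ, Fintype.card_fin, nsmul_eq_mul]
  · rw [Fintype.sum_prod_type, ← Fin.sum_univ_eq_sum_range (fun k => (2 * (τ k : ℝ) - T) * wt q e k)]
    refine sum_congr rfl fun k _ => ?_
    rw [← sum_signs T _ (hτ k), sum_mul]
    refine sum_congr rfl fun t _ => ?_
    have h4 := h3 (k, t) (Kset q k)
    rw [card_Kset q k (by omega), if_pos (by intro x _; simp)] at h4
    rw [wt, ← h4, mul_sum]
    refine sum_congr rfl fun v _ => ?_
    simp only [firstRow]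
    ring

lemma wt_abs (q e k : ℕ) : |wt q e k| = 2 ^ q * (k.factorial : ℝ) * (e.descFactorial (q - k) : ℝ) := by
  rw [wt]
  simp [abs_mul]

lemma wt_step (q T e k : ℕ) (hk : k < q) (he : (T + 1) * q ≤ e) :
    ((T:ℝ) + 1) * |wt q e (k+1)| ≤ |wt q e k| := by
  rw [wt_abs, wt_abs]
  obtain ⟨j, hj⟩ : ∃ j, q - k = j + 1 := ⟨q - k - 1, by omega⟩
  have hj' : q - (k+1) = j := by omega
  rw [hj, hj', desc_succ, Nat.factorial_succ]
  have hqe : ((T:ℝ) + 1) * (k + 1) ≤ e - j := by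
    have h1 : (((T + 1) * q : ℕ) : ℝ) ≤ e := by exact_mod_cast he
    have h2 : (q:ℝ) = k + 1 + j := by
      have : q = k + 1 + j := by omega
      exact_mod_cast this
    push_cast at h1
    rw [h2] at h1
    have : (0:ℝ) ≤ T * j := by positivity
    nlinarith
  have : (0:ℝ) ≤ 2 ^ q * (k.factorial : ℝ) * (e.descFactorial j : ℝ) := by positivity
  push_cast
  nlinarith

lemma value_inj (q T e : ℕ) (he : (T + 1) * q ≤ e) (τ τ' : ℕ → ℕ) (hτ : ∀ k, τ k ≤ T)
    (hτ' : ∀ k, τ' k ≤ T)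
    (h : perL (firstRow q T e τ :: (List.finRange q).map (CC q T e)) univ =
      perL (firstRow q T e τ' :: (List.finRange q).map (CC q T e)) univ) :
    ∀ k ≤ q, τ k = τ' k := by
  rw [value _ _ _ _ hτ, value _ _ _ _ hτ', add_right_inj, ← sub_eq_zero, ← sum_sub_distrib] at h
  have hqe : q ≤ e := le_trans (Nat.le_mul_of_pos_left q (Nat.succ_pos T)) he
  have hd := (digits (T:ℝ) q (wt q e) (fun k => (τ k : ℝ) - τ' k) ?_
    (fun k hk => wt_step q T e k hk he) ?_ ?_).2 ?_
  · intro k hk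
    have := hd k hk
    have h2 : (τ k : ℝ) = τ' k := by linarith
    exact_mod_cast h2
  · intro k hk
    rw [wt_abs]
    have : 0 < e.descFactorial (q - k) := Nat.descFactorial_pos.2 (by omega)
    have h2 := Nat.factorial_pos k
    positivity
  · intro k _
    have h1 : (τ k : ℝ) ≤ T := by exact_mod_cast hτ k
    have h2 : (τ' k : ℝ) ≤ T := by exact_mod_cast hτ' k
    have h3 : (0:ℝ) ≤ τ k := by positivity
    have h4 : (0:ℝ) ≤ τ' k := by positivity
    rw [abs_le]; constructor <;> linarith
  · intro k _
    by_cases hh : τ k = τ' k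
    · left; simp [hh]
    · right
      have : (1:ℤ) ≤ |(τ k : ℤ) - τ' k| := Int.one_le_abs (by omega)
      exact_mod_cast this
  · have : ∑ k ∈ range (q+1), ((τ k : ℝ) - τ' k) * wt q e k
      = (1/2) * ∑ k ∈ range (q+1), ((2 * (τ k : ℝ) - T) * wt q e k - (2 * (τ' k : ℝ) - T) * wt q e k) := by
      rw [mul_sum]
      refine sum_congr rfl fun k _ => by ring
    rw [this, h, mul_zero]

lemma values_finite (n : ℕ) : {x : ℝ | ∃ M : Matrix (Fin n) (Fin n) ℝ,
      (∀ i j, M i j = 1 ∨ M i j = -1) ∧ sqPerm M = x}.Finite := by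
  have h1 : {M : Matrix (Fin n) (Fin n) ℝ | ∀ i j, M i j = 1 ∨ M i j = -1}.Finite := by
    have : (Set.pi Set.univ fun _ : Fin n => Set.pi Set.univ fun _ : Fin n => ({1, -1} : Set ℝ)).Finite :=
      Set.Finite.pi fun _ => Set.Finite.pi fun _ => (Set.toFinite _)
    refine this.subset ?_
    intro M hM i _ j _
    exact hM i j
  exact h1.image sqPerm

lemma count_lower (q T e n : ℕ) (he : (T + 1) * q ≤ e) (hn : (q+1) * T * 2 ^ q + e = n)
    (hqn : q + 1 ≤ n) : (T + 1) ^ (q + 1) ≤ permCountSq n := by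
  let extd : (Fin (q+1) → Fin (T+1)) → ℕ → ℕ := fun τ k => if h : k < q + 1 then (τ ⟨k, h⟩).val else 0
  have hextd : ∀ τ k, extd τ k ≤ T := by
    intro τ k
    simp only [extd]
    split_ifs with h
    · exact Nat.lt_succ_iff.1 (τ ⟨k, h⟩).2
    · omega
  let R : (Fin (q+1) → Fin (T+1)) → List (Cols q T e → ℝ) := fun τ =>
    firstRow q T e (extd τ) :: (List.finRange q).map (CC q T e)
  have hcard : Fintype.card (Cols q T e) = n := by
    simp [Cols, hn]
  let f : (Fin (q+1) → Fin (T+1)) → ℝ := fun τ =>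
    perL (R τ ++ List.replicate (n - (q+1)) (fun _ => (1:ℝ))) univ
  have hRlen : ∀ τ, (R τ).length = q + 1 := by intro τ; simp [R]
  have hf : ∀ τ, f τ = perL (R τ) univ * ((n - (q+1)).factorial : ℝ) := by
    intro τ
    simp only [f]
    rw [perL_append_ones, hRlen, card_univ, hcard, Nat.descFactorial_self]
  have hinj : Function.Injective f := by
    intro τ τ' h
    rw [hf, hf] at h
    have hne : ((n - (q+1)).factorial : ℝ) ≠ 0 := by exact_mod_cast Nat.factorial_ne_zero _
    have h' := value_inj q T e he _ _ (hextd τ) (hextd τ') (mul_right_cancel₀ hne h)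
    ext k
    have := h' k.val (by omega)
    simpa [extd, Nat.lt_succ_iff.1 k.2] using this
  have hsub : Set.range f ⊆ {x : ℝ | ∃ M : Matrix (Fin n) (Fin n) ℝ,
      (∀ i j, M i j = 1 ∨ M i j = -1) ∧ sqPerm M = x} := by
    rintro _ ⟨τ, rfl⟩
    refine exists_sqPerm n _ ?_ hcard ?_
    · simp [hRlen]; omega
    · intro r hr d
      simp only [R, List.mem_append, List.mem_cons, List.mem_map, List.mem_replicate] at hr
      rcases hr with (rfl | ⟨i, _, rfl⟩) | ⟨_, rfl⟩
      · rcases d with ⟨c, v⟩ | d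
        · simp only [firstRow]
          rcases chi_or (Kset q c.1.val) v with h | h <;> rw [h] <;> split_ifs <;> simp
        · simp [firstRow]
      · rcases d with ⟨c, v⟩ | d
        · exact sg_or _
        · simp [CC]
      · simp
  have h1 := Set.ncard_le_ncard hsub (values_finite n)
  rw [Set.ncard_range_of_injective hinj] at h1
  simpa [permCountSq] using h1

lemma count_lower' (q n : ℕ) (hq : 1 ≤ q) (hn : 16 ^ q ≤ n) : 2 ^ (q * (q+1)) ≤ permCountSq n := by
  have h1 : q + 1 ≤ 2 ^ q := Nat.lt_two_pow_self
  have h2 : 2 ≤ 2 ^ q := le_trans (by omega) h1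
  have e16 : 16 ^ q = 2 ^ q * 2 ^ q * 2 ^ q * 2 ^ q := by
    rw [← mul_pow, ← mul_pow, ← mul_pow]
    norm_num
  set x := 2 ^ q
  have h3 : (q+1) * x * x ≤ x * x * x := by gcongr
  have h4 : x * x * x * 2 ≤ x * x * x * x := by gcongr
  have h5 : (x + 1) * q ≤ x * x * x := by
    have : (x + 1) * q ≤ (x + x) * x := Nat.mul_le_mul (by omega) (by omega)
    nlinarith
  have h6 : x ≤ x * x * x := by nlinarith
  refine le_trans ?_ (count_lower q x (n - (q+1) * x * x) n (by omega) ?_ (by omega))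
  · rw [pow_mul]
    exact Nat.pow_le_pow_left (Nat.le_succ _) _
  · show (q+1) * x * x + _ = n
    omega

/-- There is a constant `c > 0` such that for all sufficiently large `n`,
`r_n ≥ n^(c · log n / log log n)`. -/
theorem stmt1 :
    ∃ c : ℝ, 0 < c ∧ ∃ N : ℕ, ∀ n : ℕ, N ≤ n →
      (n : ℝ) ^ (c * Real.log n / Real.log (Real.log n)) ≤ (permCountSq n : ℝ) := by
  have hev : ∀ᶠ n : ℕ in Filter.atTop, (1:ℝ) ≤ Real.log (Real.log n) :=
    ((Real.tendsto_log_atTop.comp Real.tendsto_log_atTop).comp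
      tendsto_natCast_atTop_atTop).eventually_ge_atTop 1
  obtain ⟨N, hN⟩ := Filter.eventually_atTop.1 hev
  refine ⟨1/32, by norm_num, max N 16, fun n hn => ?_⟩
  have hLL := hN n (le_trans (le_max_left _ _) hn)
  have hn16 : 16 ≤ n := le_trans (le_max_right _ _) hn
  have hnpos : (0:ℝ) < n := by exact_mod_cast (by omega : 0 < n)
  set q := Nat.log 2 n / 4 with hqdef
  have hlog4 : 4 ≤ Nat.log 2 n := Nat.le_log_of_pow_le (by norm_num) (by simpa using hn16)
  have hq : 1 ≤ q := by omega
  have hpow : 16 ^ q ≤ n := by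
    calc 16 ^ q = 2 ^ (4 * q) := by rw [pow_mul]; norm_num
      _ ≤ 2 ^ (Nat.log 2 n) := Nat.pow_le_pow_right (by norm_num) (by omega)
      _ ≤ n := Nat.pow_log_le_self 2 (by omega)
  have hlt : n < 2 ^ (4 * (q + 1)) :=
    lt_of_lt_of_le (Nat.lt_pow_succ_log_self (by norm_num) n)
      (Nat.pow_le_pow_right (by norm_num) (by omega))
  have hmain : ((2:ℝ) ^ (q * (q+1))) ≤ permCountSq n := by
    exact_mod_cast count_lower' q n hq hpow
  refine le_trans ?_ hmain
  have hl2 : 0 < Real.log 2 := Real.log_pos (by norm_num)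
  have hl2' : Real.log 2 ≤ 1 := by
    have := Real.log_two_lt_d9; linarith
  have hlogn : Real.log n ≤ 4 * (q + 1) * Real.log 2 := by
    have : (n:ℝ) ≤ 2 ^ (4 * (q+1)) := by exact_mod_cast hlt.le
    have := Real.log_le_log hnpos this
    rw [Real.log_pow] at this
    push_cast at this
    exact this
  have hlogn0 : 0 ≤ Real.log n := Real.log_nonneg (by exact_mod_cast (by omega : 1 ≤ n))
  have hpw : (2:ℝ) ^ (q * (q+1)) = Real.exp (Real.log 2 * (q * (q+1))) := by
    rw [← Real.rpow_natCast, Real.rpow_def_of_pos (by norm_num)]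
    push_cast; rfl
  rw [hpw, Real.rpow_def_of_pos hnpos, Real.exp_le_exp]
  have hqR : (1:ℝ) ≤ q := by exact_mod_cast hq
  have s1 : 1/32 * Real.log n / Real.log (Real.log n) ≤ 1/32 * Real.log n :=
    div_le_self (by positivity) hLL
  have s2 : Real.log n * (1/32 * Real.log n / Real.log (Real.log n))
      ≤ Real.log n * (1/32 * Real.log n) := mul_le_mul_of_nonneg_left s1 hlogn0
  have s3 : Real.log n * Real.log n ≤ (4 * (q + 1) * Real.log 2) * (4 * (q + 1) * Real.log 2) :=
    mul_le_mul hlogn hlogn hlogn0 (by positivity)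
  have s4 : Real.log 2 * Real.log 2 ≤ Real.log 2 := by nlinarith
  have s5 : ((q:ℝ)+1) * (q+1) ≤ 2 * (q * (q+1)) := by nlinarith
  have s6 : (((q:ℝ)+1) * (q+1)) * (Real.log 2 * Real.log 2) ≤ (2 * (q * (q+1))) * Real.log 2 :=
    mul_le_mul s5 s4 (by positivity) (by positivity)
  nlinarith
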